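/- arXiv:1412.7526 — 6 statements merged into one kernel-verified Lean document; each statement's English description precedes it below -/
import Mathlib

section
/- The operator T is continuous from C(J,𝒮) to C(J,𝒮). (Part of Proposition 2.2(ii).) -/
open Set MeasureTheory

noncomputable section

/-- Projection of `ℝ` onto the half line `J = [0, ∞)`. -/
def pj (s : ℝ) : Set.Ici (0:ℝ) := ⟨max 0 s, le_max_left 0 s⟩

/-- The seminorm `[x]ₙ = max_{1 ≤ i ≤ n} |xᵢ|` on `𝒮 = ℝ^ℕ` (components indexed from `0` to `n-1`). -/
def semS (n : ℕ) (x : ℕ → ℝ) : ℝ := ⨆ i : Fin n, |x (i : ℕ)|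

/-- `IsT t₀ f α T` says that `T` is the operator
`T(v)(t) = (𝕀 − ⟨α,𝕀⟩)⁻¹ · ⟨α, (∫₀^· f(s,v(s)) ds)|_{[0,t₀]}⟩ + ∫₀^t f(s,v(s)) ds`,
written componentwise; `P` is the restriction of the primitive `∫₀^· f_n(s,v(s)) ds` to `[0,t₀]`. -/
def IsT (t₀ : ℝ) (f : ℕ → ℝ → (ℕ → ℝ) → ℝ)
    (α : ℕ → C(Set.Icc (0:ℝ) t₀, ℝ) →L[ℝ] ℝ)
    (T : C(Set.Ici (0:ℝ), ℕ → ℝ) → C(Set.Ici (0:ℝ), ℕ → ℝ)) : Prop :=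
  ∀ v : C(Set.Ici (0:ℝ), ℕ → ℝ), ∀ n : ℕ,
    ∃ P : C(Set.Icc (0:ℝ) t₀, ℝ),
      (∀ s : Set.Icc (0:ℝ) t₀, P s = ∫ u in (0:ℝ)..(s : ℝ), f n u (v (pj u))) ∧
      ∀ t : Set.Ici (0:ℝ),
        T v t n = (1 - α n 1)⁻¹ * α n P + ∫ s in (0:ℝ)..(t : ℝ), f n s (v (pj s))

/-- The integrand extended to all of `ℝ` is jointly continuous, hence so is its primitive. -/
theorem primitive_continuous (g : ℝ → (ℕ → ℝ) → ℝ)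
    (hg : ContinuousOn (fun q : ℝ × (ℕ → ℝ) => g q.1 q.2)
      (Set.Ici (0:ℝ) ×ˢ (Set.univ : Set (ℕ → ℝ)))) :
    Continuous (fun p : C(Set.Ici (0:ℝ), ℕ → ℝ) × ℝ =>
      ∫ s in (0:ℝ)..p.2, g (max 0 s) (p.1 (pj s))) := by
  have : LocallyCompactSpace (Set.Ici (0:ℝ)) := isClosed_Ici.locallyCompactSpace
  have hpj : Continuous pj := by unfold pj; fun_prop
  have hF : Continuous (Function.uncurry fun (v : C(Set.Ici (0:ℝ), ℕ → ℝ)) (s : ℝ) =>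
      g (max 0 s) (v (pj s))) := by
    have h2 : Continuous fun p : C(Set.Ici (0:ℝ), ℕ → ℝ) × ℝ => (max 0 p.2, p.1 (pj p.2)) := by
      fun_prop
    exact hg.comp_continuous h2 (fun p => ⟨Set.mem_Ici.2 (le_max_left _ _), trivial⟩)
  exact intervalIntegral.continuous_parametric_primitive_of_continuous hF

theorem integral_pj_eq (g : ℝ → (ℕ → ℝ) → ℝ) (v : C(Set.Ici (0:ℝ), ℕ → ℝ)) (t : ℝ)
    (ht : 0 ≤ t) :
    ∫ s in (0:ℝ)..t, g s (v (pj s)) = ∫ s in (0:ℝ)..t, g (max 0 s) (v (pj s)) := by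
  apply intervalIntegral.integral_congr
  intro s hs
  rw [Set.uIcc_of_le ht] at hs
  simp only [max_eq_right hs.1]

/-- Part of Proposition 2.2(ii): the operator `T` is continuous from `C(J,𝒮)` to `C(J,𝒮)`
(with the topology of uniform convergence on compact sets, i.e. the compact-open topology). -/
theorem statement_2
    (t₀ : ℝ) (ht₀ : 0 < t₀)
    (f : ℕ → ℝ → (ℕ → ℝ) → ℝ)
    (hf : ∀ n, ContinuousOn (fun q : ℝ × (ℕ → ℝ) => f n q.1 q.2)
      (Set.Ici (0:ℝ) ×ˢ (Set.univ : Set (ℕ → ℝ))))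
    (α : ℕ → C(Set.Icc (0:ℝ) t₀, ℝ) →L[ℝ] ℝ)
    (hα : ∀ n, α n 1 ≠ 1)
    (T : C(Set.Ici (0:ℝ), ℕ → ℝ) → C(Set.Ici (0:ℝ), ℕ → ℝ))
    (hT : IsT t₀ f α T) :
    Continuous T := by
  have : LocallyCompactSpace (Set.Ici (0:ℝ)) := isClosed_Ici.locallyCompactSpace
  apply ContinuousMap.continuous_of_continuous_uncurry
  refine continuous_pi fun n => ?_
  have hprim := primitive_continuous (f n) (hf n)
  let Q : C(C(Set.Ici (0:ℝ), ℕ → ℝ) × Set.Icc (0:ℝ) t₀, ℝ) :=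
    ⟨fun p => ∫ s in (0:ℝ)..(p.2 : ℝ), f n (max 0 s) (p.1 (pj s)),
      hprim.comp (continuous_fst.prodMk (continuous_subtype_val.comp continuous_snd))⟩
  have key : (fun p : C(Set.Ici (0:ℝ), ℕ → ℝ) × Set.Ici (0:ℝ) => T p.1 p.2 n) =
      fun p => (1 - α n 1)⁻¹ * α n (Q.curry p.1) +
        ∫ s in (0:ℝ)..(p.2 : ℝ), f n (max 0 s) (p.1 (pj s)) := by
    funext p
    obtain ⟨P, hP, h⟩ := hT p.1 n
    have hPQ : P = Q.curry p.1 := by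
      ext s
      rw [hP s, integral_pj_eq (f n) p.1 s s.2.1]
      rfl
    rw [h p.2, integral_pj_eq (f n) p.1 p.2 p.2.2, hPQ]
  change Continuous (fun p : C(Set.Ici (0:ℝ), ℕ → ℝ) × Set.Ici (0:ℝ) => T p.1 p.2 n)
  rw [key]
  refine Continuous.add (continuous_const.mul ?_) ?_
  · exact (α n).continuous.comp (Q.curry.continuous.comp continuous_fst)
  · exact hprim.comp (continuous_fst.prodMk (continuous_subtype_val.comp continuous_snd))
end
end

section
/- The operator T maps every bounded subset of C(J,𝒮) into a relatively compact subset of C(J,𝒮). (Part of Proposition 2.2(ii).) -/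
open Set MeasureTheory

noncomputable section

lemma equi_pi {ι X : Type*} [TopologicalSpace X] (F : ι → X → ℕ → ℝ) (x₀ : X)
    (h : ∀ n, EquicontinuousAt (fun i x => F i x n) x₀) : EquicontinuousAt F x₀ := by
  have := (equicontinuousAt_iInf_rng (κ := ℕ) (α' := ℕ → ℝ)
    (u := fun n => UniformSpace.comap (fun a : ℕ → ℝ => a n) inferInstance)
    (F := F) (x₀ := x₀)).2 (by
      intro n U hU
      obtain ⟨V, hV, hVU⟩ := hU
      filter_upwards [h n V hV] with x hx i
      exact hVU (hx i))
  rwa [← Pi.uniformSpace_eq] at this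

lemma bdd_of_vonN (M : Set C(Set.Ici (0:ℝ), ℕ → ℝ)) (hM : Bornology.IsVonNBounded ℝ M)
    (R : ℝ) (n : ℕ) : ∃ B : ℝ, ∀ v ∈ M, ∀ s ∈ Set.Icc (0:ℝ) R, |v (pj s) n| ≤ B := by
  have hpj : Continuous pj := by unfold pj; fun_prop
  let g : C(Set.Icc (0:ℝ) R, Set.Ici (0:ℝ)) := ⟨fun s => pj s, by fun_prop⟩
  let L : C(Set.Ici (0:ℝ), ℕ → ℝ) →L[ℝ] C(Set.Icc (0:ℝ) R, ℝ) :=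
    (ContinuousLinearMap.compLeftContinuous ℝ (Set.Icc (0:ℝ) R)
      (ContinuousLinearMap.proj (R := ℝ) (φ := fun _ : ℕ => ℝ) n)).comp
      (ContinuousMap.compCLM ℝ (ℕ → ℝ) g)
  have h := hM.image L
  rw [NormedSpace.isVonNBounded_iff, isBounded_iff_forall_norm_le] at h
  obtain ⟨B, hB⟩ := h
  refine ⟨B, fun v hv s hs => ?_⟩
  have h1 := hB _ (Set.mem_image_of_mem L hv)
  exact ((L v).norm_coe_le_norm ⟨s, hs⟩).trans h1

lemma f_bdd (f : ℕ → ℝ → (ℕ → ℝ) → ℝ)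
    (hf : ∀ n, ContinuousOn (fun q : ℝ × (ℕ → ℝ) => f n q.1 q.2)
      (Set.Ici (0:ℝ) ×ˢ (Set.univ : Set (ℕ → ℝ))))
    (M : Set C(Set.Ici (0:ℝ), ℕ → ℝ)) (hM : Bornology.IsVonNBounded ℝ M)
    (R : ℝ) (n : ℕ) :
    ∃ C : ℝ, 0 ≤ C ∧ ∀ v ∈ M, ∀ s ∈ Set.Icc (0:ℝ) R, ‖f n s (v (pj s))‖ ≤ C := by
  choose B hB using bdd_of_vonN M hM R
  have hK : IsCompact (Set.Icc (0:ℝ) R ×ˢ Set.pi Set.univ (fun i => Set.Icc (-B i) (B i))) :=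
    isCompact_Icc.prod (isCompact_univ_pi fun i => isCompact_Icc)
  obtain ⟨C, hC⟩ := hK.exists_bound_of_continuousOn
    ((hf n).mono (Set.prod_mono (fun x hx => hx.1) (Set.subset_univ _)))
  refine ⟨max C 0, le_max_right _ _, fun v hv s hs => ?_⟩
  refine (hC (s, v (pj s)) ⟨hs, fun i _ => abs_le.1 (hB i v hv s hs)⟩).trans (le_max_left _ _)

lemma f_int (f : ℕ → ℝ → (ℕ → ℝ) → ℝ)
    (hf : ∀ n, ContinuousOn (fun q : ℝ × (ℕ → ℝ) => f n q.1 q.2)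
      (Set.Ici (0:ℝ) ×ˢ (Set.univ : Set (ℕ → ℝ))))
    (v : C(Set.Ici (0:ℝ), ℕ → ℝ)) (n : ℕ) (a b : ℝ) (ha : 0 ≤ a) (hb : 0 ≤ b) :
    IntervalIntegrable (fun s => f n s (v (pj s))) volume a b := by
  have hpj : Continuous pj := by unfold pj; fun_prop
  apply ContinuousOn.intervalIntegrable
  refine (hf n).comp (f := fun s : ℝ => (s, v (pj s))) (by fun_prop) ?_
  intro s hs
  exact ⟨(le_min ha hb).trans hs.1, trivial⟩

lemma int_le (f : ℕ → ℝ → (ℕ → ℝ) → ℝ) (v : C(Set.Ici (0:ℝ), ℕ → ℝ)) (n : ℕ) (R C : ℝ)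
    (h : ∀ s ∈ Set.Icc (0:ℝ) R, ‖f n s (v (pj s))‖ ≤ C) (a b : ℝ)
    (ha : a ∈ Set.Icc 0 R) (hb : b ∈ Set.Icc 0 R) :
    ‖∫ s in a..b, f n s (v (pj s))‖ ≤ C * |b - a| := by
  apply intervalIntegral.norm_integral_le_of_norm_le_const
  intro s hs
  have := Set.uIoc_subset_uIcc hs
  exact h s ⟨(le_min ha.1 hb.1).trans this.1, this.2.trans (max_le ha.2 hb.2)⟩

/-- Part of Proposition 2.2(ii): the operator `T` maps every (von Neumann) bounded subset of
`C(J,𝒮)` into a relatively compact subset of `C(J,𝒮)`. -/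
theorem statement_3
    (t₀ : ℝ) (ht₀ : 0 < t₀)
    (f : ℕ → ℝ → (ℕ → ℝ) → ℝ)
    (hf : ∀ n, ContinuousOn (fun q : ℝ × (ℕ → ℝ) => f n q.1 q.2)
      (Set.Ici (0:ℝ) ×ˢ (Set.univ : Set (ℕ → ℝ))))
    (α : ℕ → C(Set.Icc (0:ℝ) t₀, ℝ) →L[ℝ] ℝ)
    (hα : ∀ n, α n 1 ≠ 1)
    (T : C(Set.Ici (0:ℝ), ℕ → ℝ) → C(Set.Ici (0:ℝ), ℕ → ℝ))
    (hT : IsT t₀ f α T) :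
    ∀ M : Set C(Set.Ici (0:ℝ), ℕ → ℝ),
      Bornology.IsVonNBounded ℝ M → IsCompact (closure (T '' M)) := by
  intro M hM
  have hcov : ⋃₀ {K : Set (Set.Ici (0:ℝ)) | IsCompact K} = Set.univ :=
    eq_univ_iff_forall.mpr (fun x ↦ mem_sUnion_of_mem (mem_singleton x) isCompact_singleton)
  haveI : T2Space (UniformOnFun (Set.Ici (0:ℝ)) (ℕ → ℝ) {K | IsCompact K}) :=
    UniformOnFun.t2Space_of_covering hcov
  refine ArzelaAscoli.isCompact_closure_of_isClosedEmbedding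
    (F := fun v : C(Set.Ici (0:ℝ), ℕ → ℝ) => (v : Set.Ici (0:ℝ) → ℕ → ℝ))
    (𝔖 := {K | IsCompact K}) (fun K hK => hK)
    (ContinuousMap.isUniformEmbedding_toUniformOnFunIsCompact.isClosedEmbedding) ?_ ?_
  · intro K _
    refine Equicontinuous.equicontinuousOn (fun x₀ => equi_pi _ _ fun n => ?_) K
    obtain ⟨C, hC0, hC⟩ := f_bdd f hf M hM ((x₀ : ℝ) + 1) n
    rw [Metric.equicontinuousAt_iff]
    intro ε hε
    refine ⟨min 1 (ε / (C + 1)), by positivity, ?_⟩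
    rintro x hx ⟨_, v, hv, rfl⟩
    have hx' : |(x : ℝ) - x₀| < min 1 (ε / (C + 1)) := hx
    have hx1 := abs_lt.1 (hx'.trans_le (min_le_left _ _))
    have hx2 := hx'.trans_le (min_le_right _ _)
    have hx00 : (0:ℝ) ≤ x₀ := x₀.2
    have hx0 : (0:ℝ) ≤ x := x.2
    obtain ⟨P, _, hP⟩ := hT v n
    have key := int_le f v n _ C (hC v hv) x₀ x ⟨hx00, by linarith⟩ ⟨hx0, by linarith⟩
    show dist (T v x₀ n) (T v x n) < ε
    rw [dist_comm, Real.dist_eq, hP, hP, add_sub_add_left_eq_sub,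
      intervalIntegral.integral_interval_sub_left (f_int f hf v n _ _ le_rfl hx0)
        (f_int f hf v n _ _ le_rfl hx00)]
    refine lt_of_le_of_lt key ?_
    rw [lt_div_iff₀ (by positivity)] at hx2
    nlinarith [abs_nonneg ((x : ℝ) - x₀)]
  · intro K _ x _
    have hx0 : (0:ℝ) ≤ x := x.2
    have : ∀ n, ∃ D : ℝ, ∀ v ∈ M, |T v x n| ≤ D := by
      intro n
      obtain ⟨C, hC0, hC⟩ := f_bdd f hf M hM (max t₀ x) n
      refine ⟨|(1 - α n 1)⁻¹| * (‖α n‖ * (C * t₀)) + C * x, fun v hv => ?_⟩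
      obtain ⟨P, hP1, hP⟩ := hT v n
      rw [hP]
      have hz : (0:ℝ) ∈ Set.Icc 0 (max t₀ (x:ℝ)) := ⟨le_rfl, hx0.trans (le_max_right _ _)⟩
      have hPn : ‖P‖ ≤ C * t₀ := by
        rw [ContinuousMap.norm_le _ (by positivity)]
        intro s
        rw [hP1]
        refine (int_le f v n _ C (hC v hv) 0 s hz
          ⟨s.2.1, s.2.2.trans (le_max_left _ _)⟩).trans ?_
        rw [sub_zero, abs_of_nonneg s.2.1]
        exact mul_le_mul_of_nonneg_left s.2.2 hC0
      refine (abs_add_le _ _).trans (add_le_add ?_ ?_)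
      · rw [abs_mul]
        refine mul_le_mul_of_nonneg_left ?_ (abs_nonneg _)
        exact ((α n).le_opNorm P).trans (mul_le_mul_of_nonneg_left hPn (norm_nonneg _))
      · have := int_le f v n _ C (hC v hv) 0 x hz ⟨hx0, le_max_right _ _⟩
        rwa [sub_zero, abs_of_nonneg hx0] at this
    choose D hD using this
    refine ⟨Set.pi Set.univ (fun n => Set.Icc (-D n) (D n)),
      isCompact_univ_pi fun n => isCompact_Icc, ?_⟩
    rintro _ ⟨v, hv, rfl⟩ n _
    exact abs_le.1 (hD n v hv)
end
end

section
/- The operator R : C(J,𝒮) → C(J,𝒮) defined by R(v)(t) = ∫₀^t f(s,v(s)) ds is continuous. -/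
open Set MeasureTheory

noncomputable section

/-- The operator `R : C(J,𝒮) → C(J,𝒮)`, `R(v)(t) = ∫₀^t f(s,v(s)) ds` (componentwise),
is continuous. -/
theorem statement_5
    (f : ℕ → ℝ → (ℕ → ℝ) → ℝ)
    (hf : ∀ n, ContinuousOn (fun q : ℝ × (ℕ → ℝ) => f n q.1 q.2)
      (Set.Ici (0:ℝ) ×ˢ (Set.univ : Set (ℕ → ℝ))))
    (R : C(Set.Ici (0:ℝ), ℕ → ℝ) → C(Set.Ici (0:ℝ), ℕ → ℝ))
    (hR : ∀ (v : C(Set.Ici (0:ℝ), ℕ → ℝ)) (t : Set.Ici (0:ℝ)) (n : ℕ),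
      R v t n = ∫ s in (0:ℝ)..(t : ℝ), f n s (v (pj s))) :
    Continuous R := by
  haveI : LocallyCompactSpace (Set.Ici (0:ℝ)) := isClosed_Ici.locallyCompactSpace
  haveI : SecondCountableTopology C(Set.Ici (0:ℝ), ℕ → ℝ) := inferInstance
  have hpj : Continuous pj := by unfold pj; fun_prop
  apply ContinuousMap.continuous_of_continuous_uncurry
  refine continuous_pi fun n => ?_
  have key : Continuous (fun p : C(Set.Ici (0:ℝ), ℕ → ℝ) × Set.Ici (0:ℝ) =>
      ∫ s in (0:ℝ)..(p.2 : ℝ), f n (pj s) (p.1 (pj s))) := by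
    refine intervalIntegral.continuous_parametric_intervalIntegral_of_continuous
      (f := fun (p : C(Set.Ici (0:ℝ), ℕ → ℝ) × Set.Ici (0:ℝ)) (s : ℝ) =>
        f n (pj s) (p.1 (pj s))) ?_ (by fun_prop)
    refine (hf n).comp_continuous
      (f := fun q : (C(Set.Ici (0:ℝ), ℕ → ℝ) × Set.Ici (0:ℝ)) × ℝ =>
        (((pj q.2 : Set.Ici (0:ℝ)) : ℝ), q.1.1 (pj q.2))) ?_ ?_
    · fun_prop
    · intro q
      exact ⟨(pj q.2).2, mem_univ _⟩
  refine key.congr fun p => ?_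
  show _ = R p.1 p.2 n
  rw [hR]
  refine intervalIntegral.integral_congr fun s hs => ?_
  have hp : (0:ℝ) ≤ p.2 := p.2.2
  rw [uIcc_of_le hp] at hs
  have : ((pj s : Set.Ici (0:ℝ)) : ℝ) = s := max_eq_right hs.1
  simp only [this]
end
end

section
/- The operator R : C(J,𝒮) → C(J,𝒮) defined by R(v)(t) = ∫₀^t f(s,v(s)) ds maps every bounded subset of C(J,𝒮) into a relatively compact subset of C(J,𝒮). -/
open Set MeasureTheory

noncomputable section

theorem bdd_aux (M : Set C(Set.Ici (0:ℝ), ℕ → ℝ)) (hM : Bornology.IsVonNBounded ℝ M)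
    (T : ℝ) (i : ℕ) :
    ∃ C : ℝ, ∀ v ∈ M, ∀ s : Set.Ici (0:ℝ), (s : ℝ) ≤ T → |v s i| ≤ C := by
  have hK : IsCompact {s : Set.Ici (0:ℝ) | (s:ℝ) ≤ T} := by
    have h := (Topology.IsClosedEmbedding.isCompact_preimage
      (isClosed_Ici (a := (0:ℝ))).isClosedEmbedding_subtypeVal (isCompact_Icc (a := (0:ℝ)) (b := T)))
    convert h using 1
    ext s
    exact ⟨fun h => ⟨s.2, h⟩, fun h => h.2⟩
  have hU : IsOpen {x : ℕ → ℝ | |x i| < 1} :=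
    isOpen_lt ((continuous_apply i).abs) continuous_const
  have hV := (ContinuousMap.isOpen_setOf_mapsTo hK hU).mem_nhds
    (x := (0 : C(Set.Ici (0:ℝ), ℕ → ℝ))) (by intro s _; simp)
  obtain ⟨r, hr, hsub⟩ := (hM hV).exists_pos
  have h2 := hsub r (by simp [abs_of_pos hr])
  refine ⟨r, fun v hv s hs => ?_⟩
  obtain ⟨w, hw, rfl⟩ := h2 hv
  have h3 : |w s i| < 1 := hw hs
  have : (r • w) s i = r * w s i := rfl
  simp only [this, abs_mul, abs_of_pos hr]
  nlinarith

/-- The operator `R : C(J,𝒮) → C(J,𝒮)`, `R(v)(t) = ∫₀^t f(s,v(s)) ds` (componentwise),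
maps every (von Neumann) bounded subset of `C(J,𝒮)` into a relatively compact subset. -/
theorem statement_6
    (f : ℕ → ℝ → (ℕ → ℝ) → ℝ)
    (hf : ∀ n, ContinuousOn (fun q : ℝ × (ℕ → ℝ) => f n q.1 q.2)
      (Set.Ici (0:ℝ) ×ˢ (Set.univ : Set (ℕ → ℝ))))
    (R : C(Set.Ici (0:ℝ), ℕ → ℝ) → C(Set.Ici (0:ℝ), ℕ → ℝ))
    (hR : ∀ (v : C(Set.Ici (0:ℝ), ℕ → ℝ)) (t : Set.Ici (0:ℝ)) (n : ℕ),
      R v t n = ∫ s in (0:ℝ)..(t : ℝ), f n s (v (pj s))) :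
    ∀ M : Set C(Set.Ici (0:ℝ), ℕ → ℝ),
      Bornology.IsVonNBounded ℝ M → IsCompact (closure (R '' M)) := by
  intro M hM
  have hpj : Continuous pj := by
    unfold pj
    fun_prop
  -- uniform bound on the integrand
  have hB : ∀ (T : ℝ) (n : ℕ), ∃ B : ℝ, 0 ≤ B ∧ ∀ v ∈ M, ∀ s : ℝ, 0 ≤ s → s ≤ T →
      |f n s (v (pj s))| ≤ B := by
    intro T n
    choose C hC using bdd_aux M hM T
    have hc : IsCompact (Set.Icc (0:ℝ) T ×ˢ Set.pi Set.univ (fun i => Set.Icc (-C i) (C i))) :=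
      isCompact_Icc.prod (isCompact_univ_pi fun i => isCompact_Icc)
    obtain ⟨B, hB⟩ := hc.exists_bound_of_continuousOn
      ((hf n).mono (Set.prod_mono (fun x hx => hx.1) (Set.subset_univ _)))
    refine ⟨max B 0, le_max_right _ _, fun v hv s h0 hT => le_trans ?_ (le_max_left _ _)⟩
    refine hB (s, v (pj s)) ⟨⟨h0, hT⟩, fun i _ => ?_⟩
    exact abs_le.1 (hC i v hv (pj s) (by simp [pj, h0, hT]))
  have hcont : ∀ (v : C(Set.Ici (0:ℝ), ℕ → ℝ)) (n : ℕ),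
      ContinuousOn (fun s => f n s (v (pj s))) (Set.Ici 0) := by
    intro v n
    exact (hf n).comp (f := fun s : ℝ => (s, v (pj s)))
      (by fun_prop) (fun s hs => ⟨hs, Set.mem_univ _⟩)
  have hint : ∀ (v : C(Set.Ici (0:ℝ), ℕ → ℝ)) (n : ℕ) (a b : ℝ), 0 ≤ a → 0 ≤ b →
      IntervalIntegrable (fun s => f n s (v (pj s))) volume a b := by
    intro v n a b ha hb
    apply ContinuousOn.intervalIntegrable
    exact (hcont v n).mono fun x hx => le_trans (le_min ha hb) hx.1
  have hLip : ∀ (T : ℝ) (n : ℕ), ∃ B : ℝ, 0 ≤ B ∧ ∀ v ∈ M, ∀ s t : Set.Ici (0:ℝ),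
      (s:ℝ) ≤ T → (t:ℝ) ≤ T → |R v t n - R v s n| ≤ B * |(t:ℝ) - s| := by
    intro T n
    obtain ⟨B, hB0, hB⟩ := hB T n
    refine ⟨B, hB0, fun v hv s t hs ht => ?_⟩
    rw [hR, hR, intervalIntegral.integral_interval_sub_left (hint v n _ _ le_rfl t.2)
      (hint v n _ _ le_rfl s.2)]
    rw [← Real.norm_eq_abs]
    refine intervalIntegral.norm_integral_le_of_norm_le_const (E := ℝ) fun x hx => ?_
    have hx' := Set.uIoc_subset_uIcc hx
    exact hB v hv x (le_trans (le_min s.2 t.2) hx'.1) (hx'.2.trans (max_le hs ht))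
  refine ArzelaAscoli.isCompact_closure_of_isClosedEmbedding
    (𝔖 := {K : Set (Set.Ici (0:ℝ)) | IsCompact K})
    (F := fun (v : C(Set.Ici (0:ℝ), ℕ → ℝ)) => (v : Set.Ici (0:ℝ) → ℕ → ℝ))
    (fun K hK => hK) ?_ ?_ ?_
  · haveI : T2Space (UniformOnFun (Set.Ici (0:ℝ)) (ℕ → ℝ) {K | IsCompact K}) :=
      UniformOnFun.t2Space_of_covering (Set.eq_univ_of_forall fun x =>
        Set.mem_sUnion_of_mem (Set.mem_singleton x) isCompact_singleton)
    exact ContinuousMap.isUniformEmbedding_toUniformOnFunIsCompact.isClosedEmbedding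
  · intro K hK
    refine Equicontinuous.equicontinuousOn (fun t₀ => ?_) K
    have key : Filter.Tendsto (fun p : Set.Ici (0:ℝ) × (R '' M) =>
        ((p.2 : C(Set.Ici (0:ℝ), ℕ → ℝ)) t₀, (p.2 : C(Set.Ici (0:ℝ), ℕ → ℝ)) p.1))
        (nhds t₀ ×ˢ ⊤) (uniformity (ℕ → ℝ)) := by
      rw [Pi.uniformity, Filter.tendsto_iInf]
      intro n
      rw [Filter.tendsto_comap_iff, Metric.uniformity_basis_dist.tendsto_right_iff]
      intro ε hε
      obtain ⟨B, hB0, hB⟩ := hLip (t₀ + 1) n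
      have h1 : ∀ᶠ t : Set.Ici (0:ℝ) in nhds t₀, (t:ℝ) < t₀ + 1 :=
        (continuous_subtype_val.tendsto t₀).eventually (gt_mem_nhds (by simp))
      have h2 : ∀ᶠ t : Set.Ici (0:ℝ) in nhds t₀, B * |(t:ℝ) - t₀| < ε := by
        have : Continuous (fun t : Set.Ici (0:ℝ) => B * |(t:ℝ) - t₀|) := by fun_prop
        exact (this.tendsto t₀).eventually (gt_mem_nhds (by simpa using hε))
      filter_upwards [(h1.and h2).prod_inl ⊤]
      rintro ⟨t, w, v, hv, rfl⟩ ⟨ht1, ht2⟩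
      simp only [Function.comp]
      change dist _ _ < ε
      rw [dist_comm, Real.dist_eq]
      exact (hB v hv t₀ t (by simp) ht1.le).trans_lt ht2
    intro U hU
    have := key hU
    rw [Filter.mem_map, Filter.mem_prod_top] at this
    exact this
  · intro K hK t ht
    choose B hB0 hB using hLip t
    refine ⟨Set.pi Set.univ (fun n => Set.Icc (-(B n * |(t:ℝ)|)) (B n * |(t:ℝ)|)),
      isCompact_univ_pi fun n => isCompact_Icc, ?_⟩
    rintro _ ⟨v, hv, rfl⟩ n _
    have h := hB n v hv ⟨0, Set.mem_Ici.2 le_rfl⟩ t t.2 le_rfl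
    have h0 : R v ⟨0, Set.mem_Ici.2 le_rfl⟩ n = 0 := by rw [hR]; simp
    rw [h0] at h
    exact abs_le.1 (by simpa using h)
end
end

section
/- Fix p ∈ ℕ and suppose that [f(t,x)]_{n_p} ≤ A_p(t)[x]_{n_p} + B_p for all t ∈ [0,t₀] and x ∈ 𝒮, where A_p ∈ L¹(0,t₀) is nonnegative and B_p ≥ 0. Then for every x ∈ C(J,𝒮), 𝒫_p(T(x)) ≤ G_p·(‖A_p‖_{L¹}·𝒫_p(x) + t₀·B_p), where 𝒫_p(x) = max_{0≤t≤t₀} [x(t)]_{n_p} and G_p = [(𝕀 − ⟨α,𝕀⟩)^{-1}]_{n_p}·[‖α‖_*]_{n_p} + 1. -/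
open Set MeasureTheory

noncomputable section

/-- Restriction of the `n`-th component of `x ∈ C(J, 𝒮)` to `[0, t₀]`, as an element of `C([0,t₀], ℝ)`. -/
def restr (t₀ : ℝ) (x : C(Set.Ici (0:ℝ), ℕ → ℝ)) (n : ℕ) : C(Set.Icc (0:ℝ) t₀, ℝ) :=
  ⟨fun s => x ⟨s.1, s.2.1⟩ n,
    ((continuous_apply n).comp x.continuous).comp
      (continuous_inclusion Set.Icc_subset_Ici_self)⟩

/-- `𝒫ₙ(x) = max_{0 ≤ t ≤ t₀} [x(t)]ₙ`. -/
def Psem (t₀ : ℝ) (n : ℕ) (x : C(Set.Ici (0:ℝ), ℕ → ℝ)) : ℝ :=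
  ⨆ t : Set.Icc (0:ℝ) t₀, semS n (x ⟨t.1, t.2.1⟩)

/-- `𝒬ₙ(x) = max_{t₀ ≤ t ≤ t_p} e^{-θ(t-t₀)} [x(t)]ₙ`. -/
def Qsem (t₀ tp θ : ℝ) (ht₀ : 0 ≤ t₀) (n : ℕ) (x : C(Set.Ici (0:ℝ), ℕ → ℝ)) : ℝ :=
  ⨆ t : Set.Icc t₀ tp, Real.exp (-θ * (t.1 - t₀)) * semS n (x ⟨t.1, le_trans ht₀ t.2.1⟩)

/-- `Gₙ = [(𝕀 − ⟨α,𝕀⟩)⁻¹]ₙ · [‖α‖_*]ₙ + 1`. -/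
def Gconst (t₀ : ℝ) (α : ℕ → C(Set.Icc (0:ℝ) t₀, ℝ) →L[ℝ] ℝ) (n : ℕ) : ℝ :=
  semS n (fun i => (1 - α i 1)⁻¹) * semS n (fun i => ‖α i‖) + 1

theorem le_semS (n : ℕ) (x : ℕ → ℝ) (i : ℕ) (hi : i < n) : |x i| ≤ semS n x :=
  le_ciSup (f := fun j : Fin n => |x (j : ℕ)|) (Set.finite_range _).bddAbove ⟨i, hi⟩

theorem semS_le (n : ℕ) (x : ℕ → ℝ) (C : ℝ) (hC : 0 ≤ C) (h : ∀ i < n, |x i| ≤ C) :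
    semS n x ≤ C :=
  Real.iSup_le (fun i => h i i.2) hC

theorem semS_nonneg (n : ℕ) (x : ℕ → ℝ) : 0 ≤ semS n x :=
  Real.iSup_nonneg (fun _ => abs_nonneg _)

theorem Psem_nonneg (t₀ : ℝ) (n : ℕ) (x : C(Set.Ici (0:ℝ), ℕ → ℝ)) : 0 ≤ Psem t₀ n x :=
  Real.iSup_nonneg (fun _ => semS_nonneg _ _)

theorem le_Psem (t₀ : ℝ) (n : ℕ) (x : C(Set.Ici (0:ℝ), ℕ → ℝ)) (t : Set.Icc (0:ℝ) t₀) :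
    semS n (x ⟨t.1, t.2.1⟩) ≤ Psem t₀ n x := by
  have hc : Continuous (fun t : Set.Icc (0:ℝ) t₀ =>
      ‖(fun i : Fin n => x ⟨t.1, t.2.1⟩ (i : ℕ))‖) := by
    refine Continuous.norm (continuous_pi fun i => ?_)
    exact (restr t₀ x i).continuous
  obtain ⟨C, hC⟩ := (isCompact_range hc).bddAbove
  refine le_ciSup (f := fun t : Set.Icc (0:ℝ) t₀ => semS n (x ⟨t.1, t.2.1⟩)) ⟨C, ?_⟩ t
  rintro _ ⟨s, rfl⟩
  refine le_trans ?_ (hC ⟨s, rfl⟩)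
  refine semS_le _ _ _ (norm_nonneg _) fun i hi => ?_
  exact norm_le_pi_norm (fun i : Fin n => x ⟨s.1, s.2.1⟩ (i : ℕ)) ⟨i, hi⟩

/-- Estimate (3.7) in the proof of the main theorem:
`𝒫_p(T(x)) ≤ G_p (‖A_p‖_{L¹} 𝒫_p(x) + t₀ B_p)`. -/
theorem statement_8
    (t₀ : ℝ) (ht₀ : 0 < t₀)
    (f : ℕ → ℝ → (ℕ → ℝ) → ℝ)
    (hf : ∀ n, ContinuousOn (fun q : ℝ × (ℕ → ℝ) => f n q.1 q.2)
      (Set.Ici (0:ℝ) ×ˢ (Set.univ : Set (ℕ → ℝ))))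
    (α : ℕ → C(Set.Icc (0:ℝ) t₀, ℝ) →L[ℝ] ℝ)
    (hα : ∀ n, α n 1 ≠ 1)
    (T : C(Set.Ici (0:ℝ), ℕ → ℝ) → C(Set.Ici (0:ℝ), ℕ → ℝ))
    (hT : IsT t₀ f α T)
    (np : ℕ → ℕ) (hnp : StrictMono np) (hnp0 : ∀ q, 0 < np q)
    (p : ℕ)
    (A : ℝ → ℝ) (B : ℝ)
    (hA_nonneg : ∀ t ∈ Set.Icc (0:ℝ) t₀, 0 ≤ A t)
    (hA_int : IntervalIntegrable A MeasureTheory.volume 0 t₀)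
    (hB : 0 ≤ B)
    (hgrowth : ∀ t ∈ Set.Icc (0:ℝ) t₀, ∀ x : ℕ → ℝ,
      semS (np p) (fun i => f i t x) ≤ A t * semS (np p) x + B) :
    ∀ x : C(Set.Ici (0:ℝ), ℕ → ℝ),
      Psem t₀ (np p) (T x) ≤
        Gconst t₀ α (np p) * ((∫ t in (0:ℝ)..t₀, A t) * Psem t₀ (np p) x + t₀ * B) := by
  intro x
  set n := np p
  set K := Psem t₀ n x with hK
  set M := (∫ t in (0:ℝ)..t₀, A t) * K + t₀ * B with hM
  have hK0 : 0 ≤ K := Psem_nonneg _ _ _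
  have hM0 : 0 ≤ M := by
    have := intervalIntegral.integral_nonneg (μ := volume) ht₀.le hA_nonneg
    positivity
  have key : ∀ i < n, ∀ s ∈ Set.Icc (0:ℝ) t₀,
      |∫ u in (0:ℝ)..s, f i u (x (pj u))| ≤ M := by
    intro i hi s hs
    have hg : IntervalIntegrable (fun u => A u * K + B) volume 0 t₀ :=
      (hA_int.mul_const K).add intervalIntegrable_const
    have hgs : IntervalIntegrable (fun u => A u * K + B) volume 0 s :=
      hg.mono_set (by
        rw [Set.uIcc_of_le hs.1, Set.uIcc_of_le ht₀.le]
        exact Set.Icc_subset_Icc_right hs.2)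
    have h1 : ‖∫ u in (0:ℝ)..s, f i u (x (pj u))‖ ≤ ∫ u in (0:ℝ)..s, (A u * K + B) := by
      refine intervalIntegral.norm_integral_le_of_norm_le hs.1 ?_ hgs
      refine Filter.Eventually.of_forall fun u hu => ?_
      have hu' : u ∈ Set.Icc (0:ℝ) t₀ := ⟨hu.1.le, hu.2.trans hs.2⟩
      have e : pj u = ⟨u, hu'.1⟩ := Subtype.ext (max_eq_right hu'.1)
      have a1 := le_semS n (fun i => f i u (x (pj u))) i hi
      have a2 := hgrowth u hu' (x (pj u))
      have a3 : semS n (x (pj u)) ≤ K := by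
        rw [e]
        exact le_Psem t₀ n x ⟨u, hu'⟩
      have a4 := mul_le_mul_of_nonneg_left a3 (hA_nonneg u hu')
      rw [Real.norm_eq_abs]
      exact a1.trans (a2.trans (by linarith))
    have h2 : ∫ u in (0:ℝ)..s, (A u * K + B) ≤ ∫ u in (0:ℝ)..t₀, (A u * K + B) := by
      refine intervalIntegral.integral_mono_interval le_rfl hs.1 hs.2 ?_ hg
      refine (ae_restrict_iff' measurableSet_Ioc).2 (Filter.Eventually.of_forall fun u hu => ?_)
      have := hA_nonneg u ⟨hu.1.le, hu.2⟩
      change 0 ≤ A u * K + B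
      positivity
    have h3 : ∫ u in (0:ℝ)..t₀, (A u * K + B) = M := by
      rw [intervalIntegral.integral_add (hA_int.mul_const K) intervalIntegrable_const,
        intervalIntegral.integral_mul_const, intervalIntegral.integral_const]
      simp [hM]
    rw [← Real.norm_eq_abs]
    linarith
  have hG0 : 0 ≤ Gconst t₀ α n := by
    have h1 := semS_nonneg n (fun i => (1 - α i 1)⁻¹)
    have h2 := semS_nonneg n (fun i => ‖α i‖)
    unfold Gconst
    positivity
  refine Real.iSup_le (fun t => ?_) (mul_nonneg hG0 hM0)
  refine semS_le _ _ _ (mul_nonneg hG0 hM0) fun i hi => ?_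
  obtain ⟨P, hP, hTx⟩ := hT x i
  rw [hTx]
  have hPn : ‖P‖ ≤ M := by
    rw [ContinuousMap.norm_le _ hM0]
    intro s
    rw [hP s]
    exact key i hi s s.2
  have b1 := le_semS n (fun i => (1 - α i 1)⁻¹) i hi
  have b2 : ‖α i‖ ≤ semS n (fun i => ‖α i‖) :=
    (le_abs_self _).trans (le_semS n (fun i => ‖α i‖) i hi)
  have b3 : |α i P| ≤ semS n (fun i => ‖α i‖) * M :=
    ((α i).le_opNorm P).trans
      (mul_le_mul b2 hPn (norm_nonneg _) (semS_nonneg _ _))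
  have b4 := mul_le_mul b1 b3 (abs_nonneg _) (semS_nonneg _ _)
  have b5 := key i hi t t.2
  calc _ ≤ |(1 - α i 1)⁻¹ * α i P| + |∫ s in (0:ℝ)..(t : ℝ), f i s (x (pj s))| := abs_add_le _ _
    _ ≤ semS n (fun i => (1 - α i 1)⁻¹) * (semS n (fun i => ‖α i‖) * M) + M := by
        rw [abs_mul]
        exact add_le_add b4 b5
    _ = _ := by unfold Gconst; ring
end
end

section
/- (Finite systems.) Fix N ∈ ℕ, t₀ ∈ (0,∞), and let (t_p)_{p∈ℕ} be a sequence with t₀ < t₁ < t₂ < … and t_p → ∞. For n = 1,…,N let g_n : J × ℝ^N → ℝ be continuous and η_n : C([0,t₀],ℝ) → ℝ be continuous linear functionals with ⟨η_n,1⟩ ≠ 1. Write g = (g_1,…,g_N), ‖y‖_∞ = max_{1≤n≤N}|y_n|, η_* = (‖η_1‖,…,‖η_N‖), and η̲ = (1/(1−⟨η_1,1⟩),…,1/(1−⟨η_N,1⟩)). Assume there exist a nonnegative A ∈ L¹(0,t₀), B ≥ 0, and for each p ∈ ℕ a constant C_p ≥ 0 such that for all x ∈ ℝ^N: ‖g(t,x)‖_∞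 ≤ A(t)‖x‖_∞ + B for t ∈ [0,t₀], and ‖g(t,x)‖_∞ ≤ C_p(‖x‖_∞ + 1) for t ∈ [t₀,t_p]. If (‖η̲‖_∞·‖η_*‖_∞ + 1)·‖A‖_{L¹} < 1, then there exist differentiable functions x_1,…,x_N : J → ℝ with x_n'(t) = g_n(t, x_1(t),…,x_N(t)) for all t ∈ J and x_n(0) = ⟨η_n, x_n|_{[0,t₀]}⟩ for n = 1,…,N. -/
open Set MeasureTheory

noncomputable section

/-- The norm `‖y‖_∞ = max_{1 ≤ n ≤ N} |y_n|` on `ℝ^N`. -/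
def semF {N : ℕ} (y : Fin N → ℝ) : ℝ := ⨆ i : Fin N, |y i|


section NullLagrangian

variable {E : Type*} [NormedAddCommGroup E] [NormedSpace ℝ E] [FiniteDimensional ℝ E]

lemma aux_det_pos (M : E →L[ℝ] E) (s : ℝ) (hs : ‖M‖ < s) :
    0 < (s • ContinuousLinearMap.id ℝ E + M).det := by
  have hs0 : 0 < s := lt_of_le_of_lt (norm_nonneg _) hs
  by_contra hneg
  push Not at hneg
  have hc : Continuous (fun τ : ℝ => (s • ContinuousLinearMap.id ℝ E + τ • M).det) :=
    ContinuousLinearMap.continuous_det.comp (by fun_prop)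
  have h0 : 0 < (s • ContinuousLinearMap.id ℝ E + (0:ℝ) • M).det := by
    have : (s • ContinuousLinearMap.id ℝ E + (0:ℝ) • M).det = s ^ Module.finrank ℝ E := by
      simp [ContinuousLinearMap.det]
    rw [this]; positivity
  have h1 : (s • ContinuousLinearMap.id ℝ E + (1:ℝ) • M).det ≤ 0 := by simpa using hneg
  obtain ⟨τ, hτ, hτ0⟩ := intermediate_value_Icc' (zero_le_one) hc.continuousOn
    (show (0:ℝ) ∈ Icc _ _ from ⟨h1, h0.le⟩)
  have hk := LinearMap.bot_lt_ker_of_det_eq_zero (f := ((s • ContinuousLinearMap.id ℝ E + τ • M : E →L[ℝ] E) : E →ₗ[ℝ] E)) hτ0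
  obtain ⟨v, hv, hv0⟩ := Submodule.exists_mem_ne_zero_of_ne_bot hk.ne'
  have hv' : s • v + τ • M v = 0 := by simpa using hv
  have hn : s * ‖v‖ = τ * ‖M v‖ := by
    have := congrArg norm (eq_neg_of_add_eq_zero_left hv')
    rwa [norm_neg, norm_smul, norm_smul, Real.norm_of_nonneg hs0.le, Real.norm_of_nonneg hτ.1] at this
  have hvpos : 0 < ‖v‖ := norm_pos_iff.2 hv0
  have h2 := M.le_opNorm v
  have h3 : τ * ‖M v‖ ≤ ‖M v‖ := mul_le_of_le_one_left (norm_nonneg _) hτ.2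
  nlinarith

lemma aux_bij (G : E → E) (K : NNReal) (hG : LipschitzWith K G) (s : ℝ) (hs : K < s) :
    Function.Bijective (fun x => s • x + G x) := by
  have hs0 : 0 < s := lt_of_le_of_lt K.2 hs
  constructor
  · intro x y hxy
    simp only at hxy
    have h1 : s • (x - y) = G y - G x := by
      rw [smul_sub, sub_eq_sub_iff_add_eq_add, hxy]; abel
    have h2 := hG.dist_le_mul y x
    rw [dist_eq_norm, ← h1, norm_smul, Real.norm_of_nonneg hs0.le, dist_comm, dist_eq_norm] at h2
    by_contra hne
    have : 0 < ‖x - y‖ := norm_pos_iff.2 (sub_ne_zero.2 hne)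
    nlinarith
  · intro y
    have hc : ContractingWith (K / s.toNNReal) (fun x => s⁻¹ • (y - G x)) := by
      constructor
      · rw [div_lt_one (by simpa using hs0)]
        rw [← NNReal.coe_lt_coe, Real.coe_toNNReal _ hs0.le]; exact hs
      · apply LipschitzWith.of_dist_le_mul
        intro a b
        have := hG.dist_le_mul a b
        rw [dist_eq_norm, ← smul_sub, norm_smul, sub_sub_sub_cancel_left, ← dist_eq_norm, dist_comm]
        rw [norm_inv, Real.norm_of_nonneg hs0.le]
        push_cast
        rw [Real.coe_toNNReal _ hs0.le, div_mul_eq_mul_div, inv_mul_eq_div]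
        gcongr
    have := hc.fixedPoint_isFixedPt
    refine ⟨hc.fixedPoint, ?_⟩
    have h2 : s⁻¹ • (y - G hc.fixedPoint) = hc.fixedPoint := this
    have h3 : y - G hc.fixedPoint = s • hc.fixedPoint := by
      rw [← h2, smul_smul, mul_inv_cancel₀ hs0.ne', one_smul, h2]
    simp only
    rw [← h3]; abel

lemma aux_interp (s₀ : ℝ) : ∃ c : ℕ → ℝ, ∀ M : E →L[ℝ] E,
    M.det = ∑ i ∈ Finset.range (Module.finrank ℝ E + 1),
      c i * ((s₀ + i) • ContinuousLinearMap.id ℝ E + M).det := by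
  set S := Finset.range (Module.finrank ℝ E + 1)
  set v : ℕ → ℝ := fun i => s₀ + i
  have hv : Set.InjOn v S := by
    intro a _ b _ h
    simpa [v] using h
  refine ⟨fun i => (Lagrange.basis S v i).eval 0, fun M => ?_⟩
  set p := (-(M : E →ₗ[ℝ] E)).charpoly
  have hp : ∀ t, p.eval t = (t • ContinuousLinearMap.id ℝ E + M).det := by
    intro t
    rw [LinearMap.eval_charpoly]
    unfold ContinuousLinearMap.det
    congr 1
    ext x
    simp
  have hd : p.degree < S.card := by
    refine lt_of_le_of_lt Polynomial.degree_le_natDegree ?_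
    rw [LinearMap.charpoly_natDegree]
    simp [S]
    exact_mod_cast Nat.lt_succ_self _
  have := congrArg (Polynomial.eval 0) (Lagrange.eq_interpolate hv hd)
  rw [Lagrange.interpolate_apply, Polynomial.eval_finsetSum, hp] at this
  simp only [zero_smul, zero_add, Polynomial.eval_mul, Polynomial.eval_C] at this
  rw [this]
  apply Finset.sum_congr rfl
  intro i _
  rw [hp, mul_comm]

variable [MeasurableSpace E] [BorelSpace E] (μ : Measure E) [μ.IsAddHaarMeasure]

lemma aux_null_large (G H : E → E) (G' H' : E → E →L[ℝ] E) (K : NNReal)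
    (hG : LipschitzWith K G) (hH : LipschitzWith K H)
    (dG : ∀ x, HasFDerivAt G (G' x) x) (dH : ∀ x, HasFDerivAt H (H' x) x)
    (B : Set E) (hB : MeasurableSet B) (hGH : ∀ x ∉ B, G x = H x) (s : ℝ) (hs : K < s) :
    ∫ x in B, (s • ContinuousLinearMap.id ℝ E + G' x).det ∂μ =
    ∫ x in B, (s • ContinuousLinearMap.id ℝ E + H' x).det ∂μ := by
  have bG := aux_bij G K hG s hs
  have bH := aux_bij H K hH s hs
  have key : ∀ (F : E → E) (F' : E → E →L[ℝ] E), LipschitzWith K F →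
      (∀ x, HasFDerivAt F (F' x) x) →
      ∫ x in B, (s • ContinuousLinearMap.id ℝ E + F' x).det ∂μ =
      ∫ x in (fun x => s • x + F x) '' B, (1:ℝ) ∂μ := by
    intro F F' hF dF
    have b := aux_bij F K hF s hs
    rw [integral_image_eq_integral_abs_det_fderiv_smul μ hB
      (f' := fun x => s • ContinuousLinearMap.id ℝ E + F' x) _ b.1.injOn]
    · apply setIntegral_congr_fun hB
      intro x _
      have := aux_det_pos (F' x) s (lt_of_le_of_lt ((dF x).le_of_lipschitz hF) hs)
      simp [abs_of_pos this]
    · intro x _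
      exact (((hasFDerivAt_id x).const_smul s).add (dF x)).hasFDerivWithinAt
  rw [key G G' hG dG, key H H' hH dH]
  congr 2
  apply Subset.antisymm
  · rintro _ ⟨x, hx, rfl⟩
    obtain ⟨z, hz⟩ := bH.2 (s • x + G x)
    refine ⟨z, ?_, hz⟩
    by_contra hzB
    have : (fun x => s • x + G x) z = (fun x => s • x + G x) x := by
      simp only; rw [← hz, hGH z hzB]
    exact hzB (bG.1 this ▸ hx)
  · rintro _ ⟨x, hx, rfl⟩
    obtain ⟨z, hz⟩ := bG.2 (s • x + H x)
    refine ⟨z, ?_, hz⟩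
    by_contra hzB
    have : (fun x => s • x + H x) z = (fun x => s • x + H x) x := by
      simp only at hz ⊢
      rw [← hz, hGH z hzB]
    exact hzB (bH.1 this ▸ hx)

lemma aux_null (G H : E → E) (G' H' : E → E →L[ℝ] E) (K : NNReal)
    (hG : LipschitzWith K G) (hH : LipschitzWith K H)
    (dG : ∀ x, HasFDerivAt G (G' x) x) (dH : ∀ x, HasFDerivAt H (H' x) x)
    (cG : Continuous G') (cH : Continuous H')
    (B : Set E) (hB : IsCompact B) (hGH : ∀ x ∉ B, G x = H x) :
    ∫ x in B, (G' x).det ∂μ = ∫ x in B, (H' x).det ∂μ := by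
  obtain ⟨c, hc⟩ := aux_interp (E := E) (K + 1)
  have key : ∀ F' : E → E →L[ℝ] E, Continuous F' → ∫ x in B, (F' x).det ∂μ =
      ∑ i ∈ Finset.range (Module.finrank ℝ E + 1), c i *
        ∫ x in B, (((K:ℝ) + 1 + i) • ContinuousLinearMap.id ℝ E + F' x).det ∂μ := by
    intro F' cF
    simp_rw [← integral_const_mul]
    rw [← integral_finsetSum]
    · congr 1
      ext x
      exact hc _
    · intro i _
      apply Integrable.const_mul
      apply ContinuousOn.integrableOn_compact hB
      apply Continuous.continuousOn
      exact ContinuousLinearMap.continuous_det.comp (by fun_prop)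
  rw [key G' cG, key H' cH]
  apply Finset.sum_congr rfl
  intro i _
  rw [aux_null_large μ G H G' H' K hG hH dG dH B hB.measurableSet hGH]
  have : (0:ℝ) ≤ i := by positivity
  linarith

end NullLagrangian

section Brouwer

lemma aux_step (δ : ℝ) (hδ : 0 < δ) {ι : Type*} [Fintype ι] : ∃ (ψ : (ι → ℝ) → (ι → ℝ))
    (ψ' : (ι → ℝ) → (ι → ℝ) →L[ℝ] (ι → ℝ)) (K : NNReal), LipschitzWith K ψ ∧
    (∀ x, HasFDerivAt ψ (ψ' x) x) ∧ Continuous ψ' ∧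
    (∀ y, (ψ' y).det = ∏ i, max 0 (δ - |y i|)) := by
  classical
  set b : ℝ → ℝ := fun t => max 0 (δ - |t|)
  have hb : Continuous b := by fun_prop
  set θ : ℝ → ℝ := fun t => ∫ s in (0:ℝ)..t, b s
  have dθ : ∀ t, HasDerivAt θ (b t) t := fun t =>
    intervalIntegral.integral_hasDerivAt_right (hb.intervalIntegrable _ _)
      (hb.stronglyMeasurableAtFilter _ _) hb.continuousAt
  have lθ : LipschitzWith δ.toNNReal θ := by
    apply lipschitzWith_of_nnnorm_deriv_le (fun t => (dθ t).differentiableAt)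
    intro t
    rw [(dθ t).deriv, ← NNReal.coe_le_coe, coe_nnnorm, Real.coe_toNNReal _ hδ.le,
      Real.norm_of_nonneg (le_max_left _ _)]
    exact max_le hδ.le (by linarith [abs_nonneg t])
  refine ⟨fun y i => θ (y i), fun y => ContinuousLinearMap.pi fun i =>
    (b (y i)) • ContinuousLinearMap.proj i, δ.toNNReal, ?_, ?_, ?_, ?_⟩
  · apply LipschitzWith.of_dist_le_mul
    intro x y
    rw [dist_pi_le_iff (by positivity)]
    intro i
    refine (lθ.dist_le_mul _ _).trans ?_
    gcongr
    exact dist_le_pi_dist x y i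
  · intro x
    rw [hasFDerivAt_pi]
    intro i
    have := (dθ (x i)).comp_hasFDerivAt x
      ((ContinuousLinearMap.proj (R := ℝ) (φ := fun _ : ι => ℝ) i).hasFDerivAt (x := x))
    exact this
  · have : (fun y : ι → ℝ => ContinuousLinearMap.pi fun i =>
      (b (y i)) • ContinuousLinearMap.proj (R := ℝ) (φ := fun _ : ι => ℝ) i) =
      fun y => ∑ i, (b (y i)) • (ContinuousLinearMap.single ℝ (fun _ : ι => ℝ) i ∘L
        ContinuousLinearMap.proj (R := ℝ) (φ := fun _ : ι => ℝ) i) := by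
      funext y
      ext v j
      simp [Finset.sum_apply, Pi.single_apply]
    rw [this]
    fun_prop
  · intro y
    have : ((ContinuousLinearMap.pi fun i =>
      (b (y i)) • ContinuousLinearMap.proj (R := ℝ) (φ := fun _ : ι => ℝ) i :
        (ι → ℝ) →L[ℝ] (ι → ℝ)) : (ι → ℝ) →ₗ[ℝ] (ι → ℝ)) =
      Matrix.toLin' (Matrix.diagonal fun i => b (y i)) := by
      apply LinearMap.ext
      intro v
      ext j
      simp [Matrix.mulVec_diagonal]
    unfold ContinuousLinearMap.det
    rw [this, LinearMap.det_toLin', Matrix.det_diagonal]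

theorem aux_brouwer {ι : Type*} [Fintype ι] (f : (ι → ℝ) → (ι → ℝ)) (hf : Continuous f)
    (M : ℝ) (hM : ∀ x, ‖f x‖ ≤ M) : ∃ x, f x = x := by
  classical
  by_contra hno
  push Not at hno
  have hM0 : 0 ≤ M := (norm_nonneg _).trans (hM 0)
  set R := M + 2 with hR
  obtain ⟨d, hd0, hd⟩ : ∃ d > 0, ∀ x ∈ Metric.closedBall (0 : ι → ℝ) R, d ≤ ‖x - f x‖ := by
    obtain ⟨x0, _, hx0⟩ := (isCompact_closedBall (0 : ι → ℝ) R).exists_isMinOn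
      ⟨0, by simp; positivity⟩ (f := fun x => ‖x - f x‖) (by fun_prop)
    exact ⟨‖x0 - f x0‖, norm_pos_iff.2 (sub_ne_zero.2 (hno x0).symm), fun x hx => hx0 hx⟩
  set δ := min (d / 2) (1 / 2) with hδ
  have hδ0 : 0 < δ := by positivity
  have hδd : δ ≤ d / 2 := min_le_left _ _
  have hδ1 : δ ≤ 1 / 2 := min_le_right _ _
  set χ : (ι → ℝ) → ℝ := fun x => max 0 (min 1 (R + 1 - ‖x‖)) with hχ
  have hχc : Continuous χ := by fun_prop
  have hχ0 : ∀ x, 0 ≤ χ x := fun x => le_max_left _ _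
  have hχ1 : ∀ x, χ x ≤ 1 := fun x => max_le zero_le_one (min_le_left _ _)
  obtain ⟨g, hg, hgd, hgs⟩ := Continuous.exists_contDiff_approx 1
    (f := fun x => χ x • f x) (ε := fun _ => δ) (hχc.smul hf) continuous_const (fun _ => hδ0)
  have hg0 : ∀ x, R + 1 ≤ ‖x‖ → g x = 0 := by
    intro x hx
    by_contra hne
    have := hgs hne
    apply this
    have : χ x = 0 := by
      simp only [hχ]
      exact max_eq_left ((min_le_right _ _).trans (by linarith))
    simp [this]
  set B := Metric.closedBall (0 : ι → ℝ) (R + 1) with hB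
  have hBc : IsCompact B := isCompact_closedBall _ _
  have hgB : ∀ x ∉ B, g x = 0 := by
    intro x hx
    apply hg0
    simp [hB] at hx
    exact hx.le
  have hgcs : HasCompactSupport g := HasCompactSupport.intro hBc hgB
  obtain ⟨Kg, hKg⟩ := hg.lipschitzWith_of_hasCompactSupport hgcs (by simp)
  obtain ⟨ψ, ψ', Kψ, lψ, dψ, cψ, detψ⟩ := aux_step δ hδ0 (ι := ι)
  set F : (ι → ℝ) → (ι → ℝ) := fun x => x - g x with hF
  have lF : LipschitzWith (1 + Kg) F := LipschitzWith.id.sub hKg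
  have dF : ∀ x, HasFDerivAt F (ContinuousLinearMap.id ℝ _ - fderiv ℝ g x) x := fun x =>
    (hasFDerivAt_id x).sub ((hg.differentiable (by simp)) x).hasFDerivAt
  have cF : Continuous (fun x => ContinuousLinearMap.id ℝ _ - fderiv ℝ g x) :=
    continuous_const.sub (hg.continuous_fderiv (by simp))
  have hFδ : ∀ x, δ ≤ ‖F x‖ := by
    intro x
    have h1 := hgd x
    rw [dist_eq_norm] at h1
    rcases le_or_gt ‖x‖ R with hx | hx
    · have hχx : χ x = 1 := by
        simp only [hχ]
        rw [min_eq_left (by linarith), max_eq_right zero_le_one]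
      simp only [hχx, one_smul] at h1
      have h2 := hd x (by simpa using hx)
      have h3 : ‖x - f x‖ ≤ ‖x - g x‖ + ‖g x - f x‖ := norm_sub_le_norm_sub_add_norm_sub _ _ _
      simp only [hF]
      linarith
    · have h2 : ‖χ x • f x‖ ≤ M := by
        rw [norm_smul, Real.norm_of_nonneg (hχ0 x)]
        exact (mul_le_of_le_one_left (norm_nonneg _) (hχ1 x)).trans (hM x)
      have h3 : ‖g x‖ ≤ ‖g x - χ x • f x‖ + ‖χ x • f x‖ := by
        simpa using norm_add_le (g x - χ x • f x) (χ x • f x)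
      have h4 : ‖x‖ - ‖g x‖ ≤ ‖x - g x‖ := norm_sub_norm_le _ _
      simp only [hF]
      linarith
  have key := aux_null (volume : Measure (ι → ℝ)) (ψ ∘ F) ψ
    (fun x => (ψ' (F x)) ∘L (ContinuousLinearMap.id ℝ _ - fderiv ℝ g x)) ψ'
    (max (Kψ * (1 + Kg)) Kψ) ((lψ.comp lF).weaken (le_max_left _ _))
    (lψ.weaken (le_max_right _ _)) (fun x => (dψ (F x)).comp x (dF x)) dψ
    ((cψ.comp lF.continuous).clm_comp cF) cψ B hBc (by
      intro x hx
      simp [hF, hgB x hx])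
  have hleft : ∀ x, ((ψ' (F x)) ∘L (ContinuousLinearMap.id ℝ _ - fderiv ℝ g x)).det = 0 := by
    intro x
    have h1 : (ψ' (F x)).det = 0 := by
      rw [detψ]
      obtain ⟨i, hi⟩ : ∃ i, δ ≤ |F x i| := by
        by_contra hcon
        push Not at hcon
        have := (pi_norm_lt_iff (x := F x) hδ0).2 (fun i => hcon i)
        exact absurd (hFδ x) (not_le.2 this)
      exact Finset.prod_eq_zero (Finset.mem_univ i) (max_eq_left (by linarith))
    have h2 : ((ψ' (F x)) ∘L (ContinuousLinearMap.id ℝ _ - fderiv ℝ g x)).det =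
      (ψ' (F x)).det * (ContinuousLinearMap.id ℝ _ - fderiv ℝ g x).det :=
      LinearMap.det_comp _ _
    rw [h2, h1, zero_mul]
  simp only [hleft, integral_zero, detψ] at key
  have hcont : Continuous (fun y : ι → ℝ => ∏ i, max 0 (δ - |y i|)) := by fun_prop
  have hpos : 0 < ∫ y in B, ∏ i, max 0 (δ - |y i|) := by
    rw [setIntegral_pos_iff_support_of_nonneg_ae]
    · have hsub : Metric.ball (0 : ι → ℝ) δ ⊆ (Function.support fun y : ι → ℝ => ∏ i, max 0 (δ - |y i|)) ∩ B := by
        intro y hy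
        rw [mem_ball_zero_iff] at hy
        constructor
        · apply Finset.prod_ne_zero_iff.2
          intro i _
          have : |y i| ≤ ‖y‖ := norm_le_pi_norm y i
          exact (lt_max_of_lt_right (by linarith)).ne'
        · simp [hB]; linarith
      exact (Metric.measure_ball_pos volume _ hδ0).trans_le (measure_mono hsub)
    · exact Filter.Eventually.of_forall fun y => Finset.prod_nonneg fun i _ => le_max_left _ _
    · exact hcont.continuousOn.integrableOn_compact hBc
  linarith

theorem aux_schauder {X : Type*} [NormedAddCommGroup X] [NormedSpace ℝ X] (T : X → X)
    (hT : Continuous T) (S : Set X) (hS : IsCompact S) (hTS : ∀ x, T x ∈ S) : ∃ x, T x = x := by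
  classical
  have approx : ∀ ε > 0, ∃ x, ‖T x - x‖ ≤ ε := by
    intro ε hε
    obtain ⟨t, htS, htf, htc⟩ := hS.finite_cover_balls hε
    have := htf.fintype
    set w : t → X → ℝ := fun i y => max 0 (ε - ‖y - i‖) with hw
    have hw0 : ∀ i y, 0 ≤ w i y := fun i y => le_max_left _ _
    have hwc : ∀ i, Continuous (w i) := fun i => by fun_prop
    have hW : ∀ y ∈ S, 0 < ∑ i, w i y := by
      intro y hy
      obtain ⟨z, hz, hyz⟩ := mem_iUnion₂.1 (htc hy)
      refine lt_of_lt_of_le ?_ (Finset.single_le_sum (f := fun i => w i y) (fun i _ => hw0 i y)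
        (Finset.mem_univ (⟨z, hz⟩ : t)))
      rw [Metric.mem_ball, dist_eq_norm] at hyz
      exact lt_max_of_lt_right (by simpa using hyz)
    set L : (t → ℝ) → X := fun a => ∑ i, a i • (i : X) with hL
    have hLc : Continuous L := by fun_prop
    obtain ⟨a, ha⟩ := aux_brouwer
      (fun a : t → ℝ => fun i => w i (T (L a)) / ∑ j, w j (T (L a))) (by
        apply continuous_pi
        intro i
        apply Continuous.div
        · exact (hwc i).comp (hT.comp hLc)
        · exact continuous_finsetSum _ fun j _ => (hwc j).comp (hT.comp hLc)
        · intro a; exact (hW _ (hTS _)).ne') 1 (by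
        intro a
        rw [pi_norm_le_iff_of_nonneg zero_le_one]
        intro i
        rw [Real.norm_of_nonneg (div_nonneg (hw0 _ _) (hW _ (hTS _)).le)]
        apply div_le_one_of_le₀ _ (hW _ (hTS _)).le
        exact Finset.single_le_sum (f := fun i => w i (T (L a))) (fun i _ => hw0 i _)
          (Finset.mem_univ i))
    refine ⟨L a, ?_⟩
    set y := T (L a) with hy
    have hai : ∀ i, a i = w i y / ∑ j, w j y := fun i => (congrFun ha i).symm
    have ha0 : ∀ i, 0 ≤ a i := fun i => by
      rw [hai]; exact div_nonneg (hw0 _ _) (hW _ (hTS _)).le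
    have hsum : ∑ i, a i = 1 := by
      simp_rw [hai]
      rw [← Finset.sum_div, div_self (hW _ (hTS _)).ne']
    have h1 : y - L a = ∑ i, a i • (y - (i : X)) := by
      simp_rw [smul_sub]
      rw [Finset.sum_sub_distrib, ← Finset.sum_smul, hsum, one_smul]
    rw [h1]
    calc ‖∑ i, a i • (y - (i : X))‖ ≤ ∑ i, ‖a i • (y - (i : X))‖ := norm_sum_le _ _
      _ ≤ ∑ i, a i * ε := by
        apply Finset.sum_le_sum
        intro i _
        rw [norm_smul, Real.norm_of_nonneg (ha0 i)]
        rcases le_or_gt ε ‖y - (i : X)‖ with h | h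
        · have : a i = 0 := by
            rw [hai]
            have : w i y = 0 := max_eq_left (by linarith)
            simp [this]
          simp [this]
        · exact mul_le_mul_of_nonneg_left h.le (ha0 i)
      _ = ε := by rw [← Finset.sum_mul, hsum, one_mul]
  choose x hx using fun n : ℕ => approx (1 / ((n : ℝ) + 1)) (by positivity)
  obtain ⟨y, hyS, φ, hφ, hlim⟩ := hS.tendsto_subseq (fun n => hTS (x n))
  have h0 : Filter.Tendsto (fun n => T (x n) - x n) Filter.atTop (nhds 0) :=
    squeeze_zero_norm hx tendsto_one_div_add_atTop_nhds_zero_nat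
  have h1 : Filter.Tendsto (fun n => x (φ n)) Filter.atTop (nhds y) := by
    have := hlim.sub (h0.comp hφ.tendsto_atTop)
    simpa [Function.comp_def] using this
  have h2 := (hT.tendsto y).comp h1
  exact ⟨y, tendsto_nhds_unique h2 hlim⟩

end Brouwer

section ODE

variable {N : ℕ}

def clampV (r : ℝ) (x : Fin N → ℝ) : Fin N → ℝ := fun i => max (-r) (min r (x i))

lemma clampV_norm (r : ℝ) (hr : 0 ≤ r) (x : Fin N → ℝ) : ‖clampV r x‖ ≤ r := by
  rw [pi_norm_le_iff_of_nonneg hr]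
  intro i
  rw [Real.norm_eq_abs, abs_le]
  exact ⟨le_max_left _ _, max_le (by linarith) (min_le_left _ _)⟩

lemma clampV_eq (r : ℝ) (x : Fin N → ℝ) (hx : ‖x‖ ≤ r) : clampV r x = x := by
  funext i
  have h := (norm_le_pi_norm x i).trans hx
  rw [Real.norm_eq_abs, abs_le] at h
  simp only [clampV]
  rw [min_eq_right h.2, max_eq_right h.1]

lemma clampV_cont : Continuous (fun q : ℝ × (Fin N → ℝ) => clampV q.1 q.2) := by
  unfold clampV
  fun_prop

lemma aux_compact (a b M D : ℝ) :
    IsCompact {v : C(Icc a b, Fin N → ℝ) | (∀ t, ‖v t‖ ≤ D) ∧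
      ∀ s t, dist (v s) (v t) ≤ M.toNNReal * dist s t} := by
  apply ArzelaAscoli.isCompact_of_equicontinuous
  · have : ContinuousMap.toFun '' {v : C(Icc a b, Fin N → ℝ) | (∀ t, ‖v t‖ ≤ D) ∧
      ∀ s t, dist (v s) (v t) ≤ M.toNNReal * dist s t} =
      (Set.univ.pi fun _ : Icc a b => Metric.closedBall (0 : Fin N → ℝ) D) ∩
      {w | ∀ s t, dist (w s) (w t) ≤ M.toNNReal * dist s t} := by
      ext w
      constructor
      · rintro ⟨v, hv, rfl⟩
        exact ⟨fun t _ => by simpa using hv.1 t, hv.2⟩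
      · rintro ⟨h1, h2⟩
        refine ⟨⟨w, (LipschitzWith.of_dist_le_mul h2).continuous⟩, ⟨?_, h2⟩, rfl⟩
        intro t
        simpa using h1 t (mem_univ _)
    rw [this]
    apply (isCompact_univ_pi fun _ => isCompact_closedBall _ _).inter_right
    simp only [ofPred_forall]
    refine isClosed_iInter fun s => isClosed_iInter fun t => isClosed_le ?_ continuous_const
    fun_prop
  · apply UniformEquicontinuous.equicontinuous
    apply LipschitzWith.uniformEquicontinuous _ M.toNNReal
    intro v
    exact LipschitzWith.of_dist_le_mul v.2.2

lemma aux_solve (a b : ℝ) (hab : a ≤ b) (f : ℝ → (Fin N → ℝ) → (Fin N → ℝ))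
    (hf : Continuous (fun q : ℝ × (Fin N → ℝ) => f q.1 q.2)) (ρ : ℝ → ℝ) (hρ : Continuous ρ)
    (hρ0 : ∀ t, 0 ≤ ρ t) (Λ : C(Icc a b, Fin N → ℝ) → (Fin N → ℝ)) (hΛ : Continuous Λ) :
    ∃ u v : C(Icc a b, Fin N → ℝ),
      (∀ t : Icc a b, v t = ∫ s in a..t, f s (clampV (ρ s) (IccExtend hab u s))) ∧
      ∀ t, u t = Λ v + v t := by
  have hF : Continuous (fun q : ℝ × (Fin N → ℝ) => f q.1 (clampV (ρ q.1) q.2)) :=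
    hf.comp (continuous_fst.prodMk (clampV_cont.comp ((hρ.comp continuous_fst).prodMk continuous_snd)))
  obtain ⟨M, hM⟩ : ∃ M, ∀ s ∈ Icc a b, ∀ x, ‖f s (clampV (ρ s) x)‖ ≤ M := by
    obtain ⟨Rm, hRm⟩ := (isCompact_Icc (a := a) (b := b)).exists_bound_of_continuousOn
      hρ.continuousOn
    obtain ⟨M, hM⟩ := ((isCompact_Icc (a := a) (b := b)).prod
      (isCompact_closedBall (0 : Fin N → ℝ) Rm)).exists_bound_of_continuousOn hf.continuousOn
    refine ⟨M, fun s hs x => hM (s, clampV (ρ s) x) ⟨hs, ?_⟩⟩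
    have := hRm s hs
    rw [Real.norm_of_nonneg (hρ0 s)] at this
    simpa using (clampV_norm _ (hρ0 s) x).trans this
  have hM0 : 0 ≤ M := (norm_nonneg _).trans (hM a ⟨le_rfl, hab⟩ 0)
  -- joint continuity
  have hj : Continuous (fun q : C(Icc a b, Fin N → ℝ) × Icc a b =>
      ∫ s in a..(q.2 : ℝ), f s (clampV (ρ s) (IccExtend hab q.1 s))) := by
    apply intervalIntegral.continuous_parametric_intervalIntegral_of_continuous
      (f := fun (q : C(Icc a b, Fin N → ℝ) × Icc a b) s =>
        f s (clampV (ρ s) (IccExtend hab q.1 s)))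
    · apply hF.comp (continuous_snd.prodMk _)
      have h1 : Continuous (fun p : (C(Icc a b, Fin N → ℝ) × Icc a b) × ℝ =>
        projIcc a b hab p.2) := continuous_projIcc.comp continuous_snd
      have h2 : Continuous (fun p : (C(Icc a b, Fin N → ℝ) × Icc a b) × ℝ => p.1.1) :=
        continuous_fst.comp continuous_fst
      exact h2.eval h1
    · fun_prop
  set V : C(Icc a b, Fin N → ℝ) → C(Icc a b, Fin N → ℝ) := fun u =>
    ⟨fun t => ∫ s in a..(t : ℝ), f s (clampV (ρ s) (IccExtend hab u s)),
      hj.comp (continuous_const.prodMk continuous_id)⟩ with hV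
  have hVc : Continuous V := ContinuousMap.continuous_of_continuous_uncurry _ hj
  have hii : ∀ u : C(Icc a b, Fin N → ℝ), Continuous
      (fun s => f s (clampV (ρ s) (IccExtend hab u s))) := fun u =>
    hF.comp (continuous_id.prodMk (u.continuous.Icc_extend'))
  have hlip : ∀ u s t, dist (V u s) (V u t) ≤ M.toNNReal * dist s t := by
    intro u s t
    rw [dist_eq_norm, Real.coe_toNNReal _ hM0]
    simp only [hV, ContinuousMap.coe_mk]
    rw [intervalIntegral.integral_interval_sub_left ((hii u).intervalIntegrable _ _)
      ((hii u).intervalIntegrable _ _)]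
    rw [Subtype.dist_eq, Real.dist_eq]
    apply intervalIntegral.norm_integral_le_of_norm_le_const
    intro r hr
    apply hM
    exact uIcc_subset_Icc t.2 s.2 (uIoc_subset_uIcc hr)
  have hbd : ∀ u t, ‖V u t‖ ≤ M * (b - a) := by
    intro u t
    have h0 : V u ⟨a, le_rfl, hab⟩ = 0 := by simp [hV]
    have := hlip u t ⟨a, le_rfl, hab⟩
    rw [h0, dist_zero_right, Real.coe_toNNReal _ hM0, Subtype.dist_eq, Real.dist_eq,
      abs_of_nonneg (by linarith [t.2.1])] at this
    refine this.trans (mul_le_mul_of_nonneg_left ?_ hM0)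
    simp only
    linarith [t.2.2]
  have hP : Continuous (fun v : C(Icc a b, Fin N → ℝ) => ContinuousMap.const (Icc a b) (Λ v) + v) := by
    refine Continuous.add ?_ continuous_id
    exact (ContinuousMap.continuous_const').comp hΛ
  obtain ⟨u, hu⟩ := aux_schauder (fun u => ContinuousMap.const (Icc a b) (Λ (V u)) + V u)
    (hP.comp hVc) _ ((aux_compact a b M (M * (b - a))).image hP)
    (fun u => ⟨V u, ⟨hbd u, hlip u⟩, rfl⟩)
  refine ⟨u, V u, fun t => rfl, fun t => ?_⟩
  conv_lhs => rw [← hu]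
  rfl

lemma aux_ivp (a b : ℝ) (hab : a ≤ b) (f : ℝ → (Fin N → ℝ) → (Fin N → ℝ))
    (hf : Continuous (fun q : ℝ × (Fin N → ℝ) => f q.1 q.2)) (C : ℝ) (hC : 0 ≤ C)
    (hg : ∀ t ∈ Icc a b, ∀ x, ‖f t x‖ ≤ C * (‖x‖ + 1)) (x0 : Fin N → ℝ) :
    ∃ z : ℝ → (Fin N → ℝ), Continuous z ∧ z a = x0 ∧
      ∀ t ∈ Icc a b, z t = x0 + ∫ s in a..t, f s (z s) := by
  set ρ : ℝ → ℝ := fun t => (‖x0‖ + 1) * Real.exp (C * |t - a|) - 1 with hρ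
  have hρc : Continuous ρ := by fun_prop
  have hρ0 : ∀ t, 0 ≤ ρ t := by
    intro t
    have h1 : 1 ≤ Real.exp (C * |t - a|) := Real.one_le_exp (by positivity)
    have := norm_nonneg x0
    simp only [hρ]
    nlinarith
  obtain ⟨u, v, hv, hu⟩ := aux_solve a b hab f hf ρ hρc hρ0 (fun _ => x0) continuous_const
  have hvb : ∀ t : Icc a b, ‖v t‖ ≤ (‖x0‖ + 1) * Real.exp (C * (t - a)) - (‖x0‖ + 1) := by
    intro t
    rw [hv]
    have hd : ∀ s ∈ uIcc a (t : ℝ), HasDerivAt (fun s => (‖x0‖ + 1) * Real.exp (C * (s - a)))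
        (C * ((‖x0‖ + 1) * Real.exp (C * (s - a)))) s := by
      intro s _
      have := ((((hasDerivAt_id s).sub_const a).const_mul C).exp).const_mul (‖x0‖ + 1)
      exact this.congr_deriv (by simp only [id]; ring)
    have hint := intervalIntegral.integral_eq_sub_of_hasDerivAt hd
      (Continuous.intervalIntegrable (by fun_prop) _ _)
    simp only [sub_self, mul_zero, Real.exp_zero, mul_one] at hint
    rw [← hint]
    apply intervalIntegral.norm_integral_le_of_norm_le t.2.1
    · refine Filter.Eventually.of_forall fun s hs => ?_
      refine (hg s ⟨hs.1.le, hs.2.trans t.2.2⟩ _).trans ?_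
      have := clampV_norm (ρ s) (hρ0 s) (IccExtend hab u s)
      apply mul_le_mul_of_nonneg_left _ hC
      have h2 : ρ s + 1 = (‖x0‖ + 1) * Real.exp (C * (s - a)) := by
        simp only [hρ]; rw [abs_of_nonneg (by linarith [hs.1])]; ring
      linarith
    · exact Continuous.intervalIntegrable (by fun_prop) _ _
  have hub : ∀ t : Icc a b, ‖u t‖ ≤ ρ t := by
    intro t
    rw [hu]
    refine (norm_add_le _ _).trans ?_
    have := hvb t
    simp only [hρ]
    rw [abs_of_nonneg (by linarith [t.2.1])]
    linarith
  have hext : ∀ t (ht : t ∈ Icc a b), IccExtend hab u t = u ⟨t, ht⟩ := fun t ht =>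
    IccExtend_of_mem hab u ht
  refine ⟨IccExtend hab u, u.continuous.Icc_extend', ?_, ?_⟩
  · rw [hext a ⟨le_rfl, hab⟩, hu, hv]; simp
  · intro t ht
    rw [hext t ht, hu, hv]
    congr 1
    apply intervalIntegral.integral_congr
    intro s hs
    simp only
    rw [clampV_eq]
    rw [uIcc_of_le ht.1] at hs
    have hs' : s ∈ Icc a b := ⟨hs.1, hs.2.trans ht.2⟩
    rw [hext s hs']
    exact hub ⟨s, hs'⟩

def SolTo (f : ℝ → (Fin N → ℝ) → (Fin N → ℝ)) (b : ℝ) (y : ℝ → (Fin N → ℝ)) : Prop :=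
  Continuous y ∧ ∀ t ∈ Icc 0 b, y t = y 0 + ∫ s in (0:ℝ)..t, f s (y s)

lemma aux_extend (a b : ℝ) (ha : 0 ≤ a) (hab : a ≤ b) (f : ℝ → (Fin N → ℝ) → (Fin N → ℝ))
    (hf : Continuous (fun q : ℝ × (Fin N → ℝ) => f q.1 q.2)) (C : ℝ) (hC : 0 ≤ C)
    (hg : ∀ t ∈ Icc a b, ∀ x, ‖f t x‖ ≤ C * (‖x‖ + 1)) (y : ℝ → (Fin N → ℝ))
    (hy : SolTo f a y) : ∃ y', SolTo f b y' ∧ ∀ t ≤ a, y' t = y t := by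
  obtain ⟨z, hzc, hza, hz⟩ := aux_ivp a b hab f hf C hC hg (y a)
  set w : ℝ → (Fin N → ℝ) := fun t => if t ≤ a then y t else z t with hw
  have hwc : Continuous w := Continuous.if_le hy.1 hzc continuous_id continuous_const
    (fun t ht => by rw [show t = a from ht, hza])
  have hw1 : ∀ t ≤ a, w t = y t := fun t ht => if_pos ht
  have hw2 : ∀ t, a ≤ t → w t = z t := by
    intro t ht
    rcases ht.eq_or_lt with rfl | h
    · rw [hw1 a le_rfl, hza]
    · exact if_neg (not_le.2 h)
  have hii : Continuous (fun s => f s (w s)) := hf.comp (continuous_id.prodMk hwc)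
  have hA : ∀ t ∈ Icc 0 a, w t = w 0 + ∫ s in (0:ℝ)..t, f s (w s) := by
    intro t ht
    rw [hw1 t ht.2, hw1 0 ha, hy.2 t ht]
    congr 1
    apply intervalIntegral.integral_congr
    intro s hs
    rw [uIcc_of_le ht.1] at hs
    simp only
    rw [hw1 s (hs.2.trans ht.2)]
  refine ⟨w, ⟨hwc, ?_⟩, hw1⟩
  intro t ht
  rcases le_total t a with h | h
  · exact hA t ⟨ht.1, h⟩
  · rw [← intervalIntegral.integral_add_adjacent_intervals (hii.intervalIntegrable 0 a)
      (hii.intervalIntegrable a t), ← add_assoc, ← hA a ⟨ha, le_rfl⟩, hw2 t h, hz t ⟨h, ht.2⟩,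
      hw1 a le_rfl]
    congr 1
    apply intervalIntegral.integral_congr
    intro s hs
    rw [uIcc_of_le h] at hs
    simp only
    rw [hw2 s hs.1]

lemma aux_global (f : ℝ → (Fin N → ℝ) → (Fin N → ℝ))
    (hf : Continuous (fun q : ℝ × (Fin N → ℝ) => f q.1 q.2)) (τ : ℕ → ℝ) (hτ0 : 0 ≤ τ 0)
    (hτ : Monotone τ) (hτt : Filter.Tendsto τ Filter.atTop Filter.atTop)
    (C : ℕ → ℝ) (hC : ∀ p, 0 ≤ C p)
    (hg : ∀ p, ∀ t ∈ Icc (τ p) (τ (p + 1)), ∀ x, ‖f t x‖ ≤ C p * (‖x‖ + 1))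
    (y : ℝ → (Fin N → ℝ)) (hy : SolTo f (τ 0) y) :
    ∃ x : ℝ → (Fin N → ℝ), (∀ t ≤ τ 0, x t = y t) ∧
      ∀ t, 0 ≤ t → HasDerivWithinAt x (f t (x t)) (Ici 0) t := by
  have ext : ∀ p (z : {z // SolTo f (τ p) z}), ∃ z' : {z' // SolTo f (τ (p + 1)) z'},
      ∀ t ≤ τ p, z'.1 t = z.1 t := by
    rintro p ⟨z, hz⟩
    obtain ⟨z', h1, h2⟩ := aux_extend (τ p) (τ (p + 1)) (hτ0.trans (hτ (Nat.zero_le p)))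
      (hτ (Nat.le_succ p)) f hf (C p) (hC p) (hg p) z hz
    exact ⟨⟨z', h1⟩, h2⟩
  choose nxt hnxt using ext
  let Y : (p : ℕ) → {z // SolTo f (τ p) z} := fun p =>
    Nat.rec (motive := fun p => {z // SolTo f (τ p) z}) ⟨y, hy⟩ (fun p z => nxt p z) p
  have hY : ∀ p, ∀ t ≤ τ p, (Y (p + 1)).1 t = (Y p).1 t := fun p => hnxt p (Y p)
  have hYle : ∀ p q, p ≤ q → ∀ t ≤ τ p, (Y q).1 t = (Y p).1 t := by
    intro p q hpq
    induction q, hpq using Nat.le_induction with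
    | base => intro t _; rfl
    | succ q hq ih =>
      intro t ht
      rw [hY q t (ht.trans (hτ hq)), ih t ht]
  have hex : ∀ t, ∃ p, t < τ p := fun t => (hτt.eventually_gt_atTop t).exists
  choose idx hidx using hex
  set x : ℝ → (Fin N → ℝ) := fun t => (Y (idx t)).1 t with hx
  have hxY : ∀ p, ∀ t ≤ τ p, x t = (Y p).1 t := by
    intro p t ht
    rcases le_total p (idx t) with h | h
    · exact hYle _ _ h t ht
    · exact (hYle _ _ h t (hidx t).le).symm
  refine ⟨x, hxY 0, ?_⟩
  intro t ht
  set p := idx t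
  have htp : t < τ p := hidx t
  obtain ⟨hc, he⟩ := (Y p).2
  have hii : Continuous (fun s => f s ((Y p).1 s)) := hf.comp (continuous_id.prodMk hc)
  have hd : HasDerivAt (fun t => (Y p).1 0 + ∫ s in (0:ℝ)..t, f s ((Y p).1 s))
      (f t ((Y p).1 t)) t := by
    apply HasDerivAt.const_add
    exact intervalIntegral.integral_hasDerivAt_right (hii.intervalIntegrable _ _)
      (hii.stronglyMeasurableAtFilter _ _) hii.continuousAt
  have hxt : x t = (Y p).1 t := hxY p t htp.le
  rw [hxt]
  apply hd.hasDerivWithinAt.congr_of_eventuallyEq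
  · filter_upwards [self_mem_nhdsWithin, mem_nhdsWithin_of_mem_nhds (Iio_mem_nhds htp)] with s h1 h2
    rw [hxY p s (le_of_lt h2), he s ⟨h1, le_of_lt h2⟩]
  · rw [hxt, he t ⟨ht, htp.le⟩]

end ODE

lemma semF_eq {N : ℕ} (hN : 0 < N) (y : Fin N → ℝ) : semF y = ‖y‖ := by
  have : Nonempty (Fin N) := ⟨⟨0, hN⟩⟩
  unfold semF
  apply le_antisymm
  · exact ciSup_le fun i => norm_le_pi_norm y i
  · have hbdd : BddAbove (range fun i => |y i|) := (finite_range _).bddAbove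
    rw [pi_norm_le_iff_of_nonempty]
    intro i
    exact le_ciSup hbdd i

lemma aux_nonlocal {N : ℕ} (t₀ : ℝ) (ht₀ : 0 ≤ t₀) (f : ℝ → (Fin N → ℝ) → (Fin N → ℝ))
    (hf : Continuous (fun q : ℝ × (Fin N → ℝ) => f q.1 q.2))
    (η : Fin N → C(Set.Icc (0:ℝ) t₀, ℝ) →L[ℝ] ℝ)
    (hη : ∀ n, η n 1 ≠ 1) (A : ℝ → ℝ) (B : ℝ)
    (hA_nonneg : ∀ t ∈ Set.Icc (0:ℝ) t₀, 0 ≤ A t)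
    (hA_int : IntervalIntegrable A MeasureTheory.volume 0 t₀)
    (hB : 0 ≤ B)
    (hgrowth1 : ∀ t ∈ Set.Icc (0:ℝ) t₀, ∀ x : Fin N → ℝ, ‖f t x‖ ≤ A t * ‖x‖ + B)
    (hsmall : (‖fun n => (1 - η n 1)⁻¹‖ * ‖fun n => ‖η n‖‖ + 1) *
      (∫ t in (0:ℝ)..t₀, A t) < 1) :
    ∃ u : C(Icc 0 t₀, Fin N → ℝ), SolTo f t₀ (IccExtend ht₀ u) ∧
      ∀ n, u ⟨0, le_rfl, ht₀⟩ n = η n ⟨fun t => u t n, by fun_prop⟩ := by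
  set α := ‖fun n => (1 - η n 1)⁻¹‖ with hα
  set β := ‖fun n => ‖η n‖‖ with hβ
  set I := ∫ t in (0:ℝ)..t₀, A t with hI
  set κ := α * β + 1 with hκ
  have hα0 : 0 ≤ α := norm_nonneg _
  have hβ0 : 0 ≤ β := norm_nonneg _
  have hκ0 : 0 ≤ κ := by positivity
  have hden : 0 < 1 - κ * I := by linarith
  set R := κ * (B * t₀) / (1 - κ * I) with hR
  have hR0 : 0 ≤ R := by positivity
  have hReq : κ * (I * R + B * t₀) = R := by
    rw [hR]; field_simp; ring
  let pr : Fin N → C(Icc 0 t₀, Fin N → ℝ) → C(Icc 0 t₀, ℝ) := fun n v =>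
    (⟨fun x => x n, continuous_apply n⟩ : C(Fin N → ℝ, ℝ)).comp v
  have hpr : ∀ n, Continuous (pr n) := fun n => ContinuousMap.continuous_postcomp _
  obtain ⟨u, v, hv, hu⟩ := aux_solve 0 t₀ ht₀ f hf (fun _ => R) continuous_const (fun _ => hR0)
    (fun v n => (1 - η n 1)⁻¹ * η n (pr n v))
    (continuous_pi fun n => continuous_const.mul ((η n).continuous.comp (hpr n)))
  set Λ : Fin N → ℝ := fun n => (1 - η n 1)⁻¹ * η n (pr n v) with hΛ
  have hint : IntervalIntegrable (fun s => A s * R + B) volume 0 t₀ :=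
    (hA_int.mul_const R).add intervalIntegrable_const
  have hQ : ∫ s in (0:ℝ)..t₀, (A s * R + B) = I * R + B * t₀ := by
    rw [intervalIntegral.integral_add (hA_int.mul_const R) intervalIntegrable_const,
      intervalIntegral.integral_mul_const, intervalIntegral.integral_const]
    simp; ring
  have hvb : ∀ t, ‖v t‖ ≤ I * R + B * t₀ := by
    intro t
    rw [hv, ← hQ]
    have h1 : ‖∫ s in (0:ℝ)..t, f s (clampV R (IccExtend ht₀ u s))‖ ≤
        ∫ s in (0:ℝ)..t, (A s * R + B) := by
      apply intervalIntegral.norm_integral_le_of_norm_le t.2.1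
      · refine Filter.Eventually.of_forall fun s hs => ?_
        have hs' : s ∈ Icc 0 t₀ := ⟨hs.1.le, hs.2.trans t.2.2⟩
        refine (hgrowth1 s hs' _).trans ?_
        have := mul_le_mul_of_nonneg_left (clampV_norm R hR0 (IccExtend ht₀ u s)) (hA_nonneg s hs')
        linarith
      · apply hint.mono_set
        rw [uIcc_of_le t.2.1, uIcc_of_le ht₀]
        exact Icc_subset_Icc_right t.2.2
    refine h1.trans ?_
    apply intervalIntegral.integral_mono_interval le_rfl t.2.1 t.2.2 _ hint
    rw [Filter.EventuallyLE, ae_restrict_iff' measurableSet_Ioc]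
    refine Filter.Eventually.of_forall fun s hs => ?_
    have := hA_nonneg s ⟨hs.1.le, hs.2⟩
    simp only [Pi.zero_apply]
    positivity
  have hQ0 : 0 ≤ I * R + B * t₀ := (norm_nonneg _).trans (hvb ⟨0, le_rfl, ht₀⟩)
  have hΛb : ‖Λ‖ ≤ α * β * (I * R + B * t₀) := by
    rw [pi_norm_le_iff_of_nonneg (by positivity)]
    intro n
    have h1 : ‖(1 - η n 1)⁻¹‖ ≤ α := norm_le_pi_norm (fun n => (1 - η n 1)⁻¹) n
    have h2 : ‖η n‖ ≤ β := by
      have := norm_le_pi_norm (fun n => ‖η n‖) n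
      exact (le_abs_self _).trans this
    have h3 : ‖pr n v‖ ≤ I * R + B * t₀ := by
      rw [ContinuousMap.norm_le _ hQ0]
      intro t
      exact (norm_le_pi_norm (v t) n).trans (hvb t)
    simp only [hΛ]
    rw [norm_mul, mul_assoc]
    apply mul_le_mul h1 _ (norm_nonneg _) hα0
    exact ((η n).le_opNorm _).trans (mul_le_mul h2 h3 (norm_nonneg _) hβ0)
  have hub : ∀ t, ‖u t‖ ≤ R := by
    intro t
    rw [hu, ← hReq, hκ, add_mul, one_mul]
    exact (norm_add_le _ _).trans (add_le_add hΛb (hvb t))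
  have hext : ∀ t (ht : t ∈ Icc 0 t₀), IccExtend ht₀ u t = u ⟨t, ht⟩ := fun t ht =>
    IccExtend_of_mem ht₀ u ht
  have hu0 : u ⟨0, le_rfl, ht₀⟩ = Λ := by
    rw [hu, hv]; simp [hΛ]
  refine ⟨u, ⟨u.continuous.Icc_extend', ?_⟩, ?_⟩
  · intro t ht
    rw [hext t ht, hext 0 ⟨le_rfl, ht₀⟩, hu0, hu, hv]
    congr 1
    apply intervalIntegral.integral_congr
    intro s hs
    simp only
    rw [clampV_eq]
    rw [uIcc_of_le ht.1] at hs
    have hs' : s ∈ Icc 0 t₀ := ⟨hs.1, hs.2.trans ht.2⟩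
    rw [hext s hs']
    exact hub ⟨s, hs'⟩
  · intro n
    have h1 : (⟨fun t => u t n, by fun_prop⟩ : C(Icc 0 t₀, ℝ)) = Λ n • (1 : C(Icc 0 t₀, ℝ)) + pr n v := by
      ext t
      simp only [ContinuousMap.coe_mk]
      rw [hu]
      simp [pr, hΛ]
    rw [h1, map_add, map_smul, hu0, smul_eq_mul]
    have hne : (1 - η n 1) ≠ 0 := sub_ne_zero.2 (hη n).symm
    have h2 : η n (pr n v) = (1 - η n 1) * Λ n := by
      simp only [hΛ]; field_simp
    rw [h2]; ring

/-- Theorem 3.3: existence for a finite system of `N` first order equations on `J = [0,∞)`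
with nonlocal initial conditions. -/
theorem statement_13
    (N : ℕ) (hN : 0 < N)
    (t₀ : ℝ) (ht₀ : 0 < t₀)
    (g : Fin N → ℝ → (Fin N → ℝ) → ℝ)
    (hg : ∀ n, ContinuousOn (fun q : ℝ × (Fin N → ℝ) => g n q.1 q.2)
      (Set.Ici (0:ℝ) ×ˢ (Set.univ : Set (Fin N → ℝ))))
    (η : Fin N → C(Set.Icc (0:ℝ) t₀, ℝ) →L[ℝ] ℝ)
    (hη : ∀ n, η n 1 ≠ 1)
    (ts : ℕ → ℝ) (hts : StrictMono ts) (hts0 : t₀ < ts 0)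
    (htsTop : Filter.Tendsto ts Filter.atTop Filter.atTop)
    (A : ℝ → ℝ) (B : ℝ) (C : ℕ → ℝ)
    (hA_nonneg : ∀ t ∈ Set.Icc (0:ℝ) t₀, 0 ≤ A t)
    (hA_int : IntervalIntegrable A MeasureTheory.volume 0 t₀)
    (hB : 0 ≤ B) (hC : ∀ p, 0 ≤ C p)
    (hgrowth1 : ∀ t ∈ Set.Icc (0:ℝ) t₀, ∀ x : Fin N → ℝ,
      semF (fun n => g n t x) ≤ A t * semF x + B)
    (hgrowth2 : ∀ p : ℕ, ∀ t ∈ Set.Icc t₀ (ts p), ∀ x : Fin N → ℝ,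
      semF (fun n => g n t x) ≤ C p * (semF x + 1))
    (hsmall : (semF (fun n => (1 - η n 1)⁻¹) * semF (fun n => ‖η n‖) + 1) *
      (∫ t in (0:ℝ)..t₀, A t) < 1) :
    ∃ (x : Fin N → ℝ → ℝ) (hc : ∀ n, ContinuousOn (x n) (Set.Icc (0:ℝ) t₀)),
      (∀ n : Fin N, ∀ t : ℝ, 0 ≤ t →
        HasDerivWithinAt (x n) (g n t (fun m => x m t)) (Set.Ici (0:ℝ)) t) ∧
      (∀ n : Fin N, x n 0 = η n (ContinuousMap.mk ((Set.Icc (0:ℝ) t₀).restrict (x n))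
        ((hc n).restrict))) := by
  simp only [semF_eq hN] at hgrowth1 hgrowth2 hsmall
  set f : ℝ → (Fin N → ℝ) → (Fin N → ℝ) := fun t x n => g n (max t 0) x with hfdef
  have hf : Continuous (fun q : ℝ × (Fin N → ℝ) => f q.1 q.2) := by
    apply continuous_pi
    intro n
    exact (hg n).comp_continuous (f := fun q : ℝ × (Fin N → ℝ) => (max q.1 0, q.2))
      (by fun_prop) (fun q => Set.mem_prod.2 ⟨Set.mem_Ici.2 (le_max_right _ _), mem_univ _⟩)
  have hfg : ∀ t, 0 ≤ t → ∀ x, f t x = fun n => g n t x := by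
    intro t ht x
    simp only [hfdef, max_eq_left ht]
  obtain ⟨u, hu, hu0⟩ := aux_nonlocal t₀ ht₀.le f hf η hη A B hA_nonneg hA_int hB
    (fun t ht x => by rw [hfg t ht.1]; exact hgrowth1 t ht x) hsmall
  let τ : ℕ → ℝ := fun p => Nat.casesOn p t₀ ts
  have hτs : ∀ p, τ (p + 1) = ts p := fun p => rfl
  have hτ0 : τ 0 = t₀ := rfl
  have hτm : Monotone τ := by
    apply monotone_nat_of_le_succ
    intro p
    cases p with
    | zero => exact hts0.le
    | succ p => exact (hts (Nat.lt_succ_self p)).le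
  have hτt : Filter.Tendsto τ Filter.atTop Filter.atTop :=
    (Filter.tendsto_add_atTop_iff_nat 1).1 htsTop
  obtain ⟨x, hx0, hx⟩ := aux_global f hf τ ht₀.le hτm hτt C hC
    (fun p t ht x => by
      have h1 : t₀ ≤ t := (hτm (Nat.zero_le p)).trans ht.1
      rw [hfg t (ht₀.le.trans h1)]
      exact hgrowth2 p t ⟨h1, ht.2⟩ x) (IccExtend ht₀.le u) hu
  have hxu : ∀ t (ht : t ∈ Icc 0 t₀), x t = u ⟨t, ht⟩ := by
    intro t ht
    rw [hx0 t ht.2, IccExtend_of_mem ht₀.le u ht]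
  have hd : ∀ n : Fin N, ∀ t : ℝ, 0 ≤ t →
        HasDerivWithinAt (fun t => x t n) (g n t (fun m => x t m)) (Set.Ici (0:ℝ)) t := by
    intro n t ht
    have := (hasDerivWithinAt_pi.1 (hx t ht)) n
    rw [hfg t ht] at this
    exact this
  refine ⟨fun n t => x t n, fun n t ht => ((hd n t ht.1).continuousWithinAt).mono
    (fun s hs => hs.1), hd, ?_⟩
  intro n
  simp only
  rw [hxu 0 ⟨le_rfl, ht₀.le⟩, hu0 n]
  congr 1
  ext t
  exact (congrFun (hxu t t.2) n).symm
end
end
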